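/- There exists ε₀ > 0 such that for every ε with 0 < ε < ε₀ the following holds in the ε-instance: if X' = (X'_1, X'_2, X'_3) is a complete EFX allocation with g_5 ∈ X'_3, g_6 ∉ X'_3, g_7 ∉ X'_3, g_3 ∈ X'_2 and g_6 ∈ X'_1, then v_1(X'_1)·v_2(X'_2)·v_3(X'_3) < (10 + 2ε^5)·(10 + ε)·10. -/

import Mathlib

open Finset

/-- Additive value of a bundle `S` under per-good valuation `v`. -/
noncomputable def val {G : Type*} (v : G → ℝ) (S : Finset G) : ℝ := ∑ g ∈ S, v g

/-- `X` is EFX: no agent `i` strongly envies agent `j`, i.e. for every good `g`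
in `X j`, `v_i(X_i) ≥ v_i(X_j \ {g})`. -/
def EFX {G : Type*} [DecidableEq G] (v : Fin 3 → G → ℝ) (X : Fin 3 → Finset G) : Prop :=
  ∀ i j : Fin 3, ∀ g ∈ X j, val (v i) (X j \ {g}) ≤ val (v i) (X i)

/-- The valuations of the ε-instance: agent `i`'s value for good `g_{k+1}` is `vE ε i k`. -/
noncomputable def vE (ε : ℝ) : Fin 3 → Fin 7 → ℝ :=
  ![![ε ^ 3 + 6 * ε ^ 5, 2 * ε ^ 5, 10 - ε ^ 3, ε ^ 3, 10 - 2 * ε ^ 3,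
      10 + 3 * ε ^ 5, ε ^ 5],
    ![ε, 0, 10 - ε ^ 2 + ε ^ 6, 2 * ε ^ 2, 10, 0, ε - ε ^ 2],
    ![0, 0, 0, 0, 10 - ε ^ 4, 10, 2 * ε ^ 4]]

/-- The partial allocation `X₁ = {g₂,g₃,g₄}`, `X₂ = {g₁,g₅}`, `X₃ = {g₆}` (goods are
`0`-indexed: good `g_{k+1}` is `k : Fin 7`). -/
def XT : Fin 3 → Finset (Fin 7) :=
  ![{1, 2, 3}, {0, 4}, {5}]

theorem val_mono {G : Type*} {v : G → ℝ} (hv : ∀ g, 0 ≤ v g) {S T : Finset G} (h : S ⊆ T) :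
    val v S ≤ val v T :=
  Finset.sum_le_sum_of_subset_of_nonneg h fun g _ _ => hv g

theorem vE_nonneg {ε : ℝ} (h0 : 0 < ε) (h1 : ε < 1 / 10) (i : Fin 3) (g : Fin 7) :
    0 ≤ vE ε i g := by
  have e2 : ε ^ 2 < ε := by nlinarith
  have e3 : ε ^ 3 ≤ 1 := pow_le_one₀ h0.le (by linarith)
  have e4 : ε ^ 4 ≤ 1 := pow_le_one₀ h0.le (by linarith)
  have p5 : 0 < ε ^ 5 := by positivity
  have p6 : 0 < ε ^ 6 := by positivity
  have p3 : 0 < ε ^ 3 := by positivity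
  fin_cases i <;> fin_cases g <;> simp [vE] <;> first | positivity | linarith

theorem nash_product_bound {ε : ℝ} (h0 : 0 < ε) (h1 : ε < 1 / 10) :
    (10 + 3 * ε ^ 5) * (10 + ε + ε ^ 6) * (10 - ε ^ 4) < (10 + 2 * ε ^ 5) * (10 + ε) * 10 := by
  have p4 : 0 < ε ^ 4 := by positivity
  have p5 : ε ^ 5 < ε ^ 4 / 10 := by nlinarith
  have q5 : 0 < ε ^ 5 := by positivity
  have p6 : ε ^ 6 < ε ^ 4 / 100 := by nlinarith
  have q6 : 0 < ε ^ 6 := by positivity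
  have p11 : ε ^ 5 * ε ^ 6 ≤ ε ^ 6 := by nlinarith [pow_le_one₀ (n := 5) h0.le (by linarith)]
  have pos : 0 ≤ (10 + 3 * ε ^ 5) * (10 + ε + ε ^ 6) - 100 := by
    nlinarith [mul_pos h0 q5, mul_pos q5 q6]
  have hε : ε * ε ^ 5 = ε ^ 6 := by ring
  nlinarith [mul_nonneg p4.le pos]

/-- For all sufficiently small `ε > 0`: any complete EFX allocation of the ε-instance with
`g₅ ∈ X'₃`, `g₆ ∉ X'₃`, `g₇ ∉ X'₃`, `g₃ ∈ X'₂` and `g₆ ∈ X'₁` (goods `0`-indexed: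
`4, 5, 6, 2, 5 : Fin 7`) has Nash-welfare product below `(10 + 2ε⁵)(10 + ε)·10`. -/
theorem eps_instance_case_g5_to_agent3 :
    ∃ ε₀ : ℝ, 0 < ε₀ ∧ ∀ ε : ℝ, 0 < ε → ε < ε₀ →
      ∀ X' : Fin 3 → Finset (Fin 7),
        (∀ i j, i ≠ j → Disjoint (X' i) (X' j)) →
        X' 0 ∪ X' 1 ∪ X' 2 = Finset.univ →
        EFX (vE ε) X' →
        (4 : Fin 7) ∈ X' 2 → (5 : Fin 7) ∉ X' 2 → (6 : Fin 7) ∉ X' 2 →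
        (2 : Fin 7) ∈ X' 1 → (5 : Fin 7) ∈ X' 0 →
        val (vE ε 0) (X' 0) * val (vE ε 1) (X' 1) * val (vE ε 2) (X' 2)
          < (10 + 2 * ε ^ 5) * (10 + ε) * 10 := by
  refine ⟨1 / 10, by norm_num, fun ε h0 h1 X' hdisj hunion hefx h4 h5 h6 h2 h50 => ?_⟩
  have hnn := vE_nonneg h0 h1
  have p4 : 0 < ε ^ 4 := by positivity
  have p5 : 0 < ε ^ 5 := by positivity
  have hcover (g : Fin 7) : g ∈ X' 0 ∨ g ∈ X' 1 ∨ g ∈ X' 2 := by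
    have : g ∈ X' 0 ∪ X' 1 ∪ X' 2 := hunion ▸ Finset.mem_univ g
    simpa [or_assoc] using this
  have hval2 : val (vE ε 2) (X' 2) ≤ 10 - ε ^ 4 := by
    have hsub : X' 2 ⊆ {0, 1, 2, 3, 4} := by
      intro g hg
      fin_cases g <;> simp_all
    refine (val_mono (hnn 2) hsub).trans (le_of_eq ?_)
    simp [_root_.val, vE]
  have hX0 : X' 0 = {5} := by
    refine Finset.eq_singleton_iff_unique_mem.2 ⟨h50, fun g hg => ?_⟩
    by_contra hne
    have hsub : {5} ⊆ X' 0 \ {g} := by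
      simpa [h50] using Ne.symm hne
    have hlow := val_mono (hnn 2) hsub
    have henvy := hefx 2 0 g hg
    simp only [_root_.val, Finset.sum_singleton] at hlow henvy hval2
    have hv5 : vE ε 2 5 = 10 := by simp [vE]
    linarith
  have hval0 : val (vE ε 0) (X' 0) = 10 + 3 * ε ^ 5 := by simp [hX0, _root_.val, vE]
  have hmem6 : 6 ∈ X' 1 := by
    have := hcover 6
    simp_all
  have hnot0 : 0 ∉ X' 1 := by
    intro hmem0
    have hsub : {0, 2} ⊆ X' 1 \ {6} := by
      intro g hg
      simp only [Finset.mem_insert, Finset.mem_singleton] at hg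
      rcases hg with rfl | rfl <;> simp [*]
    have hlow := val_mono (hnn 0) hsub
    have henvy := hefx 0 1 6 hmem6
    have hv : val (vE ε 0) {0, 2} = 10 + 6 * ε ^ 5 := by
      simp [_root_.val, vE]
      ring
    linarith
  have hval1 : val (vE ε 1) (X' 1) ≤ 10 + ε + ε ^ 6 := by
    have hnot4 : 4 ∉ X' 1 := Finset.disjoint_right.1 (hdisj 1 2 (by decide)) h4
    have hnot5 : 5 ∉ X' 1 := Finset.disjoint_left.1 (hdisj 0 1 (by decide)) h50
    have hsub : X' 1 ⊆ {1, 2, 3, 6} := by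
      intro g hg
      fin_cases g <;> simp_all
    refine (val_mono (hnn 1) hsub).trans (le_of_eq ?_)
    simp [_root_.val, vE]
    ring
  refine lt_of_le_of_lt ?_ (nash_product_bound h0 h1)
  rw [hval0]
  have hn2 : 0 ≤ val (vE ε 2) (X' 2) := Finset.sum_nonneg fun g _ => hnn 2 g
  gcongr
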